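/- Let Q be a tidy query and C = H ← B a tidy clause that is variable disjoint from Q. Then every SLD-resolvent of Q and C (with respect to any selected atom of Q) is a tidy query. -/

import Mathlib

/-- Finite first-order terms: variables and function applications.
A function symbol is identified by its name together with the number of
arguments it is applied to (fixed arity). -/
inductive Trm : Type where
  | var : ℕ → Trm
  | fn  : ℕ → List Trm → Trm

namespace Trm

/-- `|t|`: the number of occurrences of variables and function symbols
(including constants) in the term `t`. -/
def size : Trm → ℕ
  | .var _ => 1
  | .fn _ ts => 1 + (ts.attach.map (fun ⟨t, _⟩ => size t)).sum
decreasing_by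
  have := List.sizeOf_lt_of_mem ‹_ ∈ ts›
  simp [Trm.fn.sizeOf_spec]; omega

/-- Application of a substitution (a map from variables to terms) to a term. -/
def subst (σ : ℕ → Trm) : Trm → Trm
  | .var x => σ x
  | .fn f ts => .fn f (ts.attach.map (fun ⟨t, _⟩ => subst σ t))
decreasing_by
  have := List.sizeOf_lt_of_mem ‹_ ∈ ts›
  simp [Trm.fn.sizeOf_spec]; omega

/-- The number of occurrences of the variable `x` in a term. -/
def count (x : ℕ) : Trm → ℕ
  | .var y => if y = x then 1 else 0
  | .fn _ ts => (ts.attach.map (fun ⟨t, _⟩ => count x t)).sum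
decreasing_by
  have := List.sizeOf_lt_of_mem ‹_ ∈ ts›
  simp [Trm.fn.sizeOf_spec]; omega

/-- `Occurs x t` : the variable `x` occurs in the term `t`. -/
inductive Occurs (x : ℕ) : Trm → Prop where
  | var : Occurs x (.var x)
  | fn {f : ℕ} {ts : List Trm} {t : Trm} : t ∈ ts → Occurs x t → Occurs x (.fn f ts)

end Trm

/-- The set of variables occurring in a term. -/
def varSet (t : Trm) : Set ℕ := {x | Trm.Occurs x t}

/-- The set of variables occurring in a list (tuple) of terms. -/
def varsL (l : List Trm) : Set ℕ := {x | ∃ t ∈ l, Trm.Occurs x t}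

/-- The number of occurrences of a variable in a list (tuple) of terms. -/
def countL (x : ℕ) (l : List Trm) : ℕ := (l.map (Trm.count x)).sum

/-- A term is ground if no variable occurs in it. -/
def Ground (t : Trm) : Prop := ∀ x, ¬ Trm.Occurs x t

/-- An equation set: a set of equations `s ≐ t` between terms,
represented as pairs of terms. -/
abbrev EqSet := Set (Trm × Trm)

/-- `σ` is a solution (unifier) of the equation set `E`. -/
def Solves (σ : ℕ → Trm) (E : EqSet) : Prop :=
  ∀ e ∈ E, Trm.subst σ e.1 = Trm.subst σ e.2

/-- `E` is unifiable: it has a unifier. -/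
def Unifiable (E : EqSet) : Prop := ∃ σ, Solves σ E

/-- `θ` is a most general unifier of `E`. -/
def IsMgu (θ : ℕ → Trm) (E : EqSet) : Prop :=
  Solves θ E ∧ ∀ σ, Solves σ E → ∃ ρ, ∀ x, σ x = Trm.subst ρ (θ x)

/-- The equation set `s ≐̈ t` pairing corresponding members of two
equal-length tuples of terms. -/
def zipEqs (s t : List Trm) : EqSet := {e | e ∈ s.zip t}

/-- A moded atom `p(s; t)`: a predicate symbol `p` together with the tuple
`s` of terms filling its input positions and the tuple `t` of terms filling
its output positions. -/
structure Atom where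
  pred : ℕ
  inp : List Trm
  out : List Trm

/-- The variables of an atom. -/
def Atom.vars (A : Atom) : Set ℕ := varsL (A.inp ++ A.out)

/-- A query: a finite sequence of moded atoms. -/
abbrev Query := List Atom

/-- The variables of a query. -/
def queryVars (Q : Query) : Set ℕ := {x | ∃ A ∈ Q, x ∈ A.vars}

/-- A query is output linear: the combined tuple of all terms filling output
positions of its atoms is linear. -/
def OutputLinear (Q : Query) : Prop :=
  ∀ x, (Q.map (fun A => countL x A.out)).sum ≤ 1

/-- An atom is input linear: the tuple of terms filling its input positions
is linear. -/
def InputLinear (A : Atom) : Prop := ∀ x, countL x A.inp ≤ 1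

/-- `Ai →_Q Aj` : some variable occurs both in an output position of `Ai`
and in an input position of `Aj` (a relation on the atom positions of `Q`). -/
def qrel (Q : Query) (i j : Fin Q.length) : Prop :=
  ∃ x, x ∈ varsL (Q.get i).out ∧ x ∈ varsL (Q.get j).inp

/-- A query `Q` is tidy: it is output linear and `→_Q` is acyclic
(no `Ai →_Q⁺ Ai`). -/
def TidyQ (Q : Query) : Prop :=
  OutputLinear Q ∧ ∀ i, ¬ Relation.TransGen (qrel Q) i i

/-- A clause `H ← B`: a head atom and a body query. -/
structure Clause where
  head : Atom
  body : Query

/-- The variables of a clause. -/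
def clauseVars (C : Clause) : Set ℕ := C.head.vars ∪ queryVars C.body

/-- A clause `H ← Q` is tidy: `Q` is tidy, `H` is input linear, and no
variable occurring in an input position of `H` occurs in an output position
of `Q`. -/
def TidyC (C : Clause) : Prop :=
  TidyQ C.body ∧ InputLinear C.head ∧
    ∀ x ∈ varsL C.head.inp, ∀ A ∈ C.body, x ∉ varsL A.out

/-- Application of a substitution to a moded atom. -/
def Atom.subst (σ : ℕ → Trm) (A : Atom) : Atom :=
  ⟨A.pred, A.inp.map (Trm.subst σ), A.out.map (Trm.subst σ)⟩

/-- Application of a substitution to a query. -/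
def Query.subst (σ : ℕ → Trm) (Q : Query) : Query := Q.map (Atom.subst σ)

/-- The equation set pairing the corresponding argument terms of two atoms
(with the same predicate symbol). -/
def atomEqs (A H : Atom) : EqSet :=
  zipEqs (A.inp ++ A.out) (H.inp ++ H.out)

/-- The SLD-resolvent of the query `Q`, with selected atom at position `i`,
and the clause `C`, via the mgu `θ`:
`(A1,…,Ai−1, B, Ai+1,…,An)θ`. -/
def Resolvent (Q : Query) (i : ℕ) (C : Clause) (θ : ℕ → Trm) : Query :=
  Query.subst θ (Q.take i ++ C.body ++ Q.drop (i + 1))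

namespace Trm

theorem ind {P : Trm → Prop} (hv : ∀ x, P (.var x))
    (hf : ∀ f ts, (∀ t ∈ ts, P t) → P (.fn f ts)) : ∀ t, P t
  | .var x => hv x
  | .fn f ts => hf f ts (fun t ht => ind hv hf t)
decreasing_by
  have := List.sizeOf_lt_of_mem ht
  simp [Trm.fn.sizeOf_spec]; omega

theorem subst_var (σ : ℕ → Trm) (x : ℕ) : subst σ (.var x) = σ x := by
  rw [subst]

theorem subst_fn (σ : ℕ → Trm) (f : ℕ) (ts : List Trm) :
    subst σ (.fn f ts) = .fn f (ts.map (subst σ)) := by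
  rw [subst]; simp

theorem size_fn (f : ℕ) (ts : List Trm) :
    size (.fn f ts) = 1 + (ts.map size).sum := by
  rw [size]; simp

theorem size_pos (t : Trm) : 0 < size t := by
  cases t with
  | var x => rw [size]; omega
  | fn f ts => rw [size_fn]; omega

theorem count_var (x y : ℕ) : count x (.var y) = if y = x then 1 else 0 := by
  rw [count]

theorem count_fn (x : ℕ) (f : ℕ) (ts : List Trm) :
    count x (.fn f ts) = countL x ts := by
  rw [count]; simp [countL]

theorem occurs_var {x y : ℕ} : Occurs x (.var y) ↔ y = x := by
  constructor
  · intro h; cases h; rfl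
  · rintro rfl; exact .var

theorem occurs_fn {x f : ℕ} {ts : List Trm} :
    Occurs x (.fn f ts) ↔ ∃ t ∈ ts, Occurs x t := by
  constructor
  · intro h; cases h with
    | fn h1 h2 => exact ⟨_, h1, h2⟩
  · rintro ⟨t, h1, h2⟩; exact .fn h1 h2

theorem count_pos (x : ℕ) (t : Trm) : 0 < count x t ↔ Occurs x t := by
  induction t using ind with
  | hv y => rw [count_var, occurs_var]; split_ifs <;> simp_all
  | hf f ts ih =>
    rw [count_fn, occurs_fn, countL, Nat.pos_iff_ne_zero, Ne, List.sum_eq_zero_iff]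
    simp only [List.mem_map, forall_exists_index, and_imp, forall_apply_eq_imp_iff₂]
    push Not
    constructor
    · rintro ⟨t, ht, h⟩; exact ⟨t, ht, (ih t ht).1 (Nat.pos_of_ne_zero h)⟩
    · rintro ⟨t, ht, h⟩; exact ⟨t, ht, Nat.pos_iff_ne_zero.1 ((ih t ht).2 h)⟩

theorem subst_subst (θ τ : ℕ → Trm) (u : Trm) :
    subst θ (subst τ u) = subst (fun x => subst θ (τ x)) u := by
  induction u using ind with
  | hv y => simp [subst_var]
  | hf f ts ih =>
    simp only [subst_fn, List.map_map]
    congr 1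
    exact List.map_congr_left (fun t ht => ih t ht)

theorem subst_congr (σ τ : ℕ → Trm) (u : Trm) (h : ∀ x, Occurs x u → σ x = τ x) :
    subst σ u = subst τ u := by
  induction u using ind with
  | hv y => simpa [subst_var] using h y .var
  | hf f ts ih =>
    simp only [subst_fn]
    congr 1
    exact List.map_congr_left (fun t ht => ih t ht (fun x hx => h x (.fn ht hx)))

theorem occurs_subst (y : ℕ) (τ : ℕ → Trm) (u : Trm) :
    Occurs y (subst τ u) ↔ ∃ x, Occurs x u ∧ Occurs y (τ x) := by
  induction u using ind with
  | hv z => simp [subst_var, occurs_var]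
  | hf f ts ih =>
    simp only [subst_fn, occurs_fn, List.mem_map]
    constructor
    · rintro ⟨_, ⟨t, ht, rfl⟩, h⟩
      obtain ⟨x, hx, hy⟩ := (ih t ht).1 h
      exact ⟨x, ⟨t, ht, hx⟩, hy⟩
    · rintro ⟨x, ⟨t, ht, hx⟩, hy⟩
      exact ⟨_, ⟨t, ht, rfl⟩, (ih t ht).2 ⟨x, hx, hy⟩⟩

end Trm

open Trm

/-- single substitution -/
def sg (X : ℕ) (t : Trm) : ℕ → Trm := fun x => if x = X then t else .var x

theorem sum_affine {β : Type} (l : List β) (f g h : β → ℕ) (k : ℕ)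
    (H : ∀ b ∈ l, f b ≤ g b + h b * k) :
    (l.map f).sum ≤ (l.map g).sum + (l.map h).sum * k := by
  induction l with
  | nil => simp
  | cons b l ih =>
    have h1 := H b (by simp)
    have h2 := ih (fun c hc => H c (by simp [hc]))
    simp only [List.map_cons, List.sum_cons, add_mul]
    omega

theorem count_sg (X : ℕ) (t : Trm) (y : ℕ) (u : Trm) :
    count y (subst (sg X t) u) ≤ count y u + count X u * count y t := by
  induction u using ind with
  | hv z =>
    simp only [subst_var, sg, count_var]
    split_ifs <;> simp_all [count_var]
  | hf f ts ih =>
    simp only [subst_fn, count_fn, countL, List.map_map]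
    exact sum_affine ts _ _ _ _ ih

theorem countL_sg (X : ℕ) (t : Trm) (y : ℕ) (l : List Trm) :
    countL y (l.map (subst (sg X t))) ≤ countL y l + countL X l * count y t := by
  simp only [countL, List.map_map]
  exact sum_affine l _ _ _ _ (fun u _ => count_sg X t y u)

theorem countL_pos (x : ℕ) (l : List Trm) : 0 < countL x l ↔ x ∈ varsL l := by
  rw [← count_fn x 0 l, count_pos, occurs_fn]; rfl

def outC (x : ℕ) (R : Query) : ℕ := (R.map (fun A => countL x A.out)).sum

theorem outC_sg (X : ℕ) (t : Trm) (y : ℕ) (R : Query) :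
    outC y (Query.subst (sg X t) R) ≤ outC y R + outC X R * count y t := by
  simp only [outC, Query.subst, List.map_map]
  exact sum_affine R _ _ _ _ (fun A _ => countL_sg X t y A.out)

theorem outC_pos (x : ℕ) (R : Query) : 0 < outC x R ↔ ∃ A ∈ R, x ∈ varsL A.out := by
  rw [outC, Nat.pos_iff_ne_zero, Ne, List.sum_eq_zero_iff]
  simp only [List.mem_map, forall_exists_index, and_imp, forall_apply_eq_imp_iff₂]
  push Not
  simp only [← countL_pos, Nat.pos_iff_ne_zero]

structure Good {α : Type} [Preorder α] (r : ℕ → α) (E : List (Trm × Trm)) (R : Query) : Prop where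
  lin : ∀ x, countL x (E.map Prod.snd) + outC x R ≤ 1
  eqs : ∀ e ∈ E, ∀ x, Occurs x e.1 → ∀ y, Occurs y e.2 → r x < r y
  ats : ∀ A ∈ R, ∀ x ∈ varsL A.inp, ∀ y ∈ varsL A.out, r x < r y

theorem Good.tidy {α : Type} [Preorder α] {r : ℕ → α} {R : Query} (h : Good r [] R) :
    TidyQ R := by
  refine ⟨fun x => by have := h.lin x; simpa [countL, outC] using this, fun i hi => ?_⟩
  have key : ∀ j, Relation.TransGen (qrel R) i j →
      ∃ y ∈ varsL (R.get i).out, ∃ x ∈ varsL (R.get j).inp, r y ≤ r x := by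
    intro j hj
    induction hj with
    | single h => obtain ⟨x, h1, h2⟩ := h; exact ⟨x, h1, x, h2, le_rfl⟩
    | tail _ hjk ih =>
      obtain ⟨y, hy, x, hx, hle⟩ := ih
      obtain ⟨z, hz1, hz2⟩ := hjk
      exact ⟨y, hy, z, hz2, hle.trans (h.ats _ (List.get_mem _ _) x hx z hz1).le⟩
  obtain ⟨y, hy, x, hx, hle⟩ := key i hi
  exact absurd (h.ats _ (List.get_mem _ _) x hx y hy) (not_lt_of_ge hle)

theorem TidyQ.rank {R : Query} (h : TidyQ R) :
    ∃ r : ℕ → ℕ, ∀ A ∈ R, ∀ x ∈ varsL A.inp, ∀ y ∈ varsL A.out, r x < r y := by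
  classical
  let rk : Fin R.length → ℕ := fun i =>
    (Finset.univ.filter (fun j => Relation.TransGen (qrel R) j i)).card
  have hrk : ∀ i j, qrel R i j → rk i < rk j := by
    intro i j hij
    apply Finset.card_lt_card
    rw [Finset.ssubset_iff_of_subset]
    · refine ⟨i, ?_, ?_⟩
      · simpa using Relation.TransGen.single hij
      · simpa using h.2 i
    · intro k hk
      simp only [Finset.mem_filter, Finset.mem_univ, true_and] at hk ⊢
      exact hk.tail hij
  refine ⟨fun y => (Finset.univ.filter (fun i => y ∈ varsL (R.get i).out)).sup
    (fun i => rk i + 1), ?_⟩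
  intro A hA x hx y hy
  obtain ⟨i, rfl⟩ := List.mem_iff_get.1 hA
  have h1 : (Finset.univ.filter (fun i => x ∈ varsL (R.get i).out)).sup
    (fun i => rk i + 1) ≤ rk i := by
    apply Finset.sup_le
    intro k hk
    simp only [Finset.mem_filter, Finset.mem_univ, true_and] at hk
    exact hrk k i ⟨x, hk, hx⟩
  have h2 : rk i + 1 ≤ (Finset.univ.filter (fun i => y ∈ varsL (R.get i).out)).sup
    (fun i => rk i + 1) :=
    Finset.le_sup (f := fun i => rk i + 1) (by simpa using hy)
  exact lt_of_le_of_lt h1 h2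

theorem varsL_subst {y : ℕ} {τ : ℕ → Trm} {l : List Trm} :
    y ∈ varsL (l.map (subst τ)) ↔ ∃ x ∈ varsL l, Occurs y (τ x) := by
  have := occurs_subst y τ (.fn 0 l)
  rw [subst_fn, occurs_fn] at this
  simp only [occurs_fn] at this
  exact this

theorem subst_sg {θ : ℕ → Trm} {X : ℕ} {t : Trm} (h : θ X = subst θ t) (u : Trm) :
    subst θ (subst (sg X t) u) = subst θ u := by
  rw [subst_subst]
  apply subst_congr
  intro x _
  simp only [sg]
  split_ifs with hx
  · rw [hx, h]
  · rw [subst_var]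

theorem occurs_sg {X y x : ℕ} {t : Trm} (h : Occurs y (sg X t x)) :
    (x = X ∧ Occurs y t) ∨ (x ≠ X ∧ x = y) := by
  simp only [sg] at h
  split_ifs at h with hx
  · exact .inl ⟨hx, h⟩
  · exact .inr ⟨hx, occurs_var.1 h⟩

def SolvesL (σ : ℕ → Trm) (E : List (Trm × Trm)) : Prop :=
  ∀ e ∈ E, subst σ e.1 = subst σ e.2

def WMgu (V : Set ℕ) (θ : ℕ → Trm) (E : List (Trm × Trm)) : Prop :=
  SolvesL θ E ∧ ∀ σ, SolvesL σ E → ∃ ρ, ∀ x ∈ V, σ x = subst ρ (θ x)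

def substE (τ : ℕ → Trm) (E : List (Trm × Trm)) : List (Trm × Trm) :=
  E.map (fun e => (subst τ e.1, subst τ e.2))

structure InV (V : Set ℕ) (E : List (Trm × Trm)) (R : Query) : Prop where
  e1 : ∀ e ∈ E, ∀ x, Occurs x e.1 → x ∈ V
  e2 : ∀ e ∈ E, ∀ x, Occurs x e.2 → x ∈ V
  ri : ∀ A ∈ R, ∀ x ∈ varsL A.inp, x ∈ V
  ro : ∀ A ∈ R, ∀ x ∈ varsL A.out, x ∈ V

theorem WMgu.elim {V : Set ℕ} {θ : ℕ → Trm} {E : List (Trm × Trm)} {X : ℕ} {t : Trm}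
    {e : Trm × Trm} (he : e = (.var X, t) ∨ e = (t, .var X)) (hX : ¬ Occurs X t)
    (h : WMgu V θ (e :: E)) :
    θ X = subst θ t ∧ WMgu (V \ {X}) θ (substE (sg X t) E) := by
  have hXt : θ X = subst θ t := by
    have := h.1 e (by simp)
    rcases he with rfl | rfl
    · simpa [subst_var] using this
    · simpa [subst_var] using this.symm
  refine ⟨hXt, ?_, ?_⟩
  · intro e' he'
    obtain ⟨e'', h1, rfl⟩ := List.mem_map.1 he'
    simp only [subst_sg hXt]
    exact h.1 _ (by simp [h1])
  · intro σ hσ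
    let σ' : ℕ → Trm := fun x => if x = X then subst σ t else σ x
    have hs : ∀ u, subst σ (subst (sg X t) u) = subst σ' u := by
      intro u
      rw [subst_subst]
      congr 1
      funext x
      simp only [sg, σ']
      split_ifs
      · rfl
      · rw [subst_var]
    have ht : subst σ' t = σ' X := by
      have : σ' X = subst σ t := by simp [σ']
      rw [this]
      apply subst_congr
      intro x hx
      have : x ≠ X := by rintro rfl; exact hX hx
      simp [σ', this]
    obtain ⟨ρ, hρ⟩ := h.2 σ' (by
      intro e' he'
      rcases List.mem_cons.1 he' with rfl | he'
      · rcases he with rfl | rfl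
        · simp [subst_var, ht]
        · simp [subst_var, ht]
      · rw [← hs, ← hs]
        exact hσ (subst (sg X t) e'.1, subst (sg X t) e'.2) (List.mem_map.2 ⟨e', he', rfl⟩))
    refine ⟨ρ, fun x hx => ?_⟩
    rw [← hρ x hx.1]
    have : x ≠ X := hx.2
    simp [σ', this]

theorem InV.elim {V : Set ℕ} {E : List (Trm × Trm)} {R : Query} {X : ℕ} {t : Trm}
    (hX : ¬ Occurs X t) (ht : ∀ x, Occurs x t → x ∈ V) (h : InV V E R) :
    InV (V \ {X}) (substE (sg X t) E) (Query.subst (sg X t) R) := by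
  have key : ∀ x y, x ∈ V → Occurs y (sg X t x) → y ∈ V \ {X} := by
    intro x y hx hy
    rcases occurs_sg hy with ⟨rfl, h1⟩ | ⟨h1, rfl⟩
    · exact ⟨ht y h1, by rintro rfl; exact hX h1⟩
    · exact ⟨hx, h1⟩
  constructor
  · intro e he y hy
    obtain ⟨e, h_mem, rfl⟩ := List.mem_map.1 he
    replace he := h_mem
    obtain ⟨x, hx, hxy⟩ := (occurs_subst _ _ _).1 hy
    exact key x y (h.e1 e he x hx) hxy
  · intro e he y hy
    obtain ⟨e, h_mem, rfl⟩ := List.mem_map.1 he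
    replace he := h_mem
    obtain ⟨x, hx, hxy⟩ := (occurs_subst _ _ _).1 hy
    exact key x y (h.e2 e he x hx) hxy
  · intro A hA y hy
    obtain ⟨A, h_mem, rfl⟩ := List.mem_map.1 hA
    replace hA := h_mem
    obtain ⟨x, hx, hxy⟩ := varsL_subst.1 hy
    exact key x y (h.ri A hA x hx) hxy
  · intro A hA y hy
    obtain ⟨A, h_mem, rfl⟩ := List.mem_map.1 hA
    replace hA := h_mem
    obtain ⟨x, hx, hxy⟩ := varsL_subst.1 hy
    exact key x y (h.ro A hA x hx) hxy

theorem lin_sg (X : ℕ) (t : Trm) (y : ℕ) (E : List (Trm × Trm)) (R : Query) :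
    countL y ((substE (sg X t) E).map Prod.snd) + outC y (Query.subst (sg X t) R) ≤
      (countL y (E.map Prod.snd) + outC y R) +
        (countL X (E.map Prod.snd) + outC X R) * count y t := by
  have h1 := countL_sg X t y (E.map Prod.snd)
  have h2 := outC_sg X t y R
  have h3 : (substE (sg X t) E).map Prod.snd = (E.map Prod.snd).map (subst (sg X t)) := by
    simp [substE]
  rw [h3, add_mul]; omega

theorem countL_cons (x : ℕ) (t : Trm) (l : List Trm) :
    countL x (t :: l) = count x t + countL x l := by simp [countL]

theorem countL_append (x : ℕ) (l l' : List Trm) :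
    countL x (l ++ l') = countL x l + countL x l' := by simp [countL]

/-- transfer of ranks through a substitution -/
theorem ranks_sg {α : Type} [Preorder α] {r r' : ℕ → α} {E : List (Trm × Trm)} {R : Query}
    {τ : ℕ → Trm}
    (heqs : ∀ e ∈ E, ∀ x, Occurs x e.1 → ∀ y, Occurs y e.2 → r x < r y)
    (hats : ∀ A ∈ R, ∀ x ∈ varsL A.inp, ∀ y ∈ varsL A.out, r x < r y)
    (hin : ∀ x z, Occurs z (τ x) → r' z ≤ r x)
    (hout : ∀ y, ((∃ e ∈ E, Occurs y e.2) ∨ ∃ A ∈ R, y ∈ varsL A.out) →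
      ∀ z, Occurs z (τ y) → r y ≤ r' z) :
    (∀ e ∈ substE τ E, ∀ x, Occurs x e.1 → ∀ y, Occurs y e.2 → r' x < r' y) ∧
    (∀ A ∈ Query.subst τ R, ∀ x ∈ varsL A.inp, ∀ y ∈ varsL A.out, r' x < r' y) := by
  constructor
  · intro e he z hz w hw
    obtain ⟨e, h_mem, rfl⟩ := List.mem_map.1 he
    replace he := h_mem
    obtain ⟨x, hx, hxz⟩ := (occurs_subst _ _ _).1 hz
    obtain ⟨y, hy, hyw⟩ := (occurs_subst _ _ _).1 hw
    exact (hin x z hxz).trans_lt ((heqs e he x hx y hy).trans_le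
      (hout y (.inl ⟨e, he, hy⟩) w hyw))
  · intro A hA z hz w hw
    obtain ⟨A, h_mem, rfl⟩ := List.mem_map.1 hA
    replace hA := h_mem
    obtain ⟨x, hx, hxz⟩ := varsL_subst.1 hz
    obtain ⟨y, hy, hyw⟩ := varsL_subst.1 hw
    exact (hin x z hxz).trans_lt ((hats A hA x hx y hy).trans_le
      (hout y (.inr ⟨A, hA, hy⟩) w hyw))

theorem not_out {E : List (Trm × Trm)} {R : Query} {y : ℕ}
    (h : countL y (E.map Prod.snd) + outC y R = 0) :
    ¬ ((∃ e ∈ E, Occurs y e.2) ∨ ∃ A ∈ R, y ∈ varsL A.out) := by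
  rintro (⟨e, he, hy⟩ | hA)
  · have := (countL_pos y (E.map Prod.snd)).2 ⟨e.2, List.mem_map.2 ⟨e, he, rfl⟩, hy⟩
    omega
  · have := (outC_pos y R).2 hA
    omega

theorem Good.elim1 {α : Type} [Preorder α] {r : ℕ → α} {E : List (Trm × Trm)} {R : Query}
    {X : ℕ} {t : Trm} (h : Good r ((.var X, t) :: E) R) :
    ∃ r' : ℕ → α, Good r' (substE (sg X t) E) (Query.subst (sg X t) R) := by
  classical
  have hX : ∀ y, Occurs y t → r X < r y := fun y hy => h.eqs _ List.mem_cons_self X .var y hy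
  have hl := h.lin
  simp only [List.map_cons, countL_cons] at hl
  refine ⟨fun y => if Occurs y t then r X else r y, ?_⟩
  obtain ⟨h1, h2⟩ := ranks_sg (E := E) (R := R) (r := r)
    (r' := fun y => if Occurs y t then r X else r y) (τ := sg X t)
    (fun e he => h.eqs e (by simp [he])) h.ats
    (by
      intro x z hz
      rcases occurs_sg hz with ⟨rfl, h1⟩ | ⟨h1, rfl⟩
      · simp [h1]
      · show (if Occurs x t then r X else r x) ≤ r x
        split_ifs with hx
        · exact (hX _ hx).le
        · exact le_rfl)
    (by
      intro y hy z hz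
      rcases occurs_sg hz with ⟨rfl, h1⟩ | ⟨h1, rfl⟩
      · simp [h1]
      · have : ¬ Occurs y t := by
          intro ho
          have h3 := (count_pos _ _).2 ho
          have h4 := hl y
          exact not_out (by omega) hy
        simp [this])
  refine ⟨fun y => ?_, h1, h2⟩
  have h3 := lin_sg X t y E R
  have h4 := hl y
  have h5 := hl X
  have h6 : (countL X (E.map Prod.snd) + outC X R) * count y t ≤ 1 * count y t :=
    Nat.mul_le_mul_right _ (by omega)
  omega

theorem Good.elim2 {α : Type} [Preorder α] {r : ℕ → α} {E : List (Trm × Trm)} {R : Query}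
    {X : ℕ} {t : Trm} (h : Good r ((t, .var X) :: E) R) :
    Good r (substE (sg X t) E) (Query.subst (sg X t) R) := by
  have hX : ∀ y, Occurs y t → r y < r X := fun y hy => h.eqs _ List.mem_cons_self y hy X .var
  have hl := h.lin
  simp only [List.map_cons, countL_cons] at hl
  have h0 : countL X (E.map Prod.snd) + outC X R = 0 := by
    have := hl X
    simp [count_var] at this
    omega
  obtain ⟨h1, h2⟩ := ranks_sg (E := E) (R := R) (r := r) (r' := r) (τ := sg X t)
    (fun e he => h.eqs e (by simp [he])) h.ats
    (by
      intro x z hz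
      rcases occurs_sg hz with ⟨rfl, h1⟩ | ⟨h1, rfl⟩
      · exact (hX z h1).le
      · exact le_rfl)
    (by
      intro y hy z hz
      rcases occurs_sg hz with ⟨rfl, h1⟩ | ⟨h1, rfl⟩
      · exact absurd hy (not_out h0)
      · exact le_rfl)
  refine ⟨fun y => ?_, h1, h2⟩
  have h3 := lin_sg X t y E R
  have h4 := hl y
  rw [h0] at h3
  omega

theorem query_subst_sg {θ : ℕ → Trm} {X : ℕ} {t : Trm} (h : θ X = subst θ t) (R : Query) :
    Query.subst θ (Query.subst (sg X t) R) = Query.subst θ R := by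
  simp only [Query.subst, List.map_map]
  apply List.map_congr_left
  intro A _
  simp [Atom.subst, Function.comp_def, subst_sg h]

def meas (θ : ℕ → Trm) (E : List (Trm × Trm)) : ℕ :=
  (E.map (fun e => size (subst θ e.1))).sum

theorem meas_sg {θ : ℕ → Trm} {X : ℕ} {t : Trm} (h : θ X = subst θ t) (E : List (Trm × Trm)) :
    meas θ (substE (sg X t) E) = meas θ E := by
  simp [meas, substE, Function.comp_def, subst_sg h]

theorem rename_good {α : Type} [Preorder α] {V : Set ℕ} {r : ℕ → α} {θ : ℕ → Trm} {R : Query}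
    (hV : InV V [] R) (hG : Good r [] R) (hm : WMgu V θ []) :
    ∃ r' : ℕ → α, Good r' [] (Query.subst θ R) := by
  obtain ⟨ρ, hρ⟩ := hm.2 Trm.var (by intro e he; simp at he)
  let π : ℕ → ℕ := fun y => match ρ y with
    | .var x => x
    | .fn _ _ => 0
  have hc : ∀ y u, (∀ x, Occurs x u → x ∈ V) → count y (subst θ u) ≤ count (π y) u := by
    intro y u
    induction u using ind with
    | hv x =>
      intro hu
      have hx := hρ x (hu x .var)
      rw [subst_var]
      cases hth : θ x with
      | fn f ts => rw [hth, subst_fn] at hx; cases hx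
      | var z =>
        rw [hth, subst_var] at hx
        simp only [count_var]
        by_cases hzy : z = y
        · subst hzy
          have : π z = x := by simp [π, ← hx]
          simp [this]
        · simp [hzy]
    | hf f ts ih =>
      intro hu
      simp only [subst_fn, count_fn, countL, List.map_map]
      exact List.sum_le_sum (fun t ht => ih t ht (fun x hx => hu x (.fn ht hx)))
  have hcL : ∀ y l, (∀ x ∈ varsL l, x ∈ V) → countL y (l.map (subst θ)) ≤ countL (π y) l := by
    intro y l hl
    have := hc y (.fn 0 l) (fun x hx => hl x (occurs_fn.1 hx))
    simpa only [subst_fn, count_fn] using this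
  have ho : ∀ y l, (∀ x ∈ varsL l, x ∈ V) → y ∈ varsL (l.map (subst θ)) → π y ∈ varsL l := by
    intro y l hl hy
    rw [← countL_pos] at hy ⊢
    exact hy.trans_le (hcL y l hl)
  refine ⟨fun y => r (π y), ?_, ?_, ?_⟩
  · intro y
    have h1 := hG.lin (π y)
    have h2 : outC y (Query.subst θ R) ≤ outC (π y) R := by
      simp only [outC, Query.subst, List.map_map]
      exact List.sum_le_sum (fun A hA => hcL y A.out (hV.ro A hA))
    simp [countL] at h1 ⊢
    omega
  · intro e he; simp at he
  · intro A hA x hx y hy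
    obtain ⟨A, h_mem, rfl⟩ := List.mem_map.1 hA
    replace hA := h_mem
    exact hG.ats A hA _ (ho x _ (hV.ri A hA) hx) _ (ho y _ (hV.ro A hA) hy)

theorem zip_solves (σ : ℕ → Trm) : ∀ (ss ts : List Trm), ss.length = ts.length →
    ((∀ e ∈ ss.zip ts, subst σ e.1 = subst σ e.2) ↔ ss.map (subst σ) = ts.map (subst σ))
  | [], [], _ => by simp
  | [], _ :: _, h => by simp at h
  | _ :: _, [], h => by simp at h
  | s :: ss, t :: ts, h => by
    have := zip_solves σ ss ts (by simpa using h)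
    simp only [List.zip_cons_cons, List.mem_cons, forall_eq_or_imp, this, List.map_cons,
      List.cons.injEq]

theorem main_lemma {α : Type} [Preorder α] (θ : ℕ → Trm) : ∀ (n : ℕ) (V : Set ℕ) (r : ℕ → α)
    (E : List (Trm × Trm)) (R : Query), meas θ E ≤ n → InV V E R → Good r E R → WMgu V θ E →
    ∃ r' : ℕ → α, Good r' [] (Query.subst θ R) := by
  intro n
  induction n with
  | zero =>
    intro V r E R hn hV hG hm
    cases E with
    | nil => exact rename_good hV hG hm
    | cons e E =>
      have := size_pos (subst θ e.1)
      simp [meas] at hn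
      omega
  | succ n ih =>
    intro V r E R hn hV hG hm
    cases E with
    | nil => exact rename_good hV hG hm
    | cons e E =>
      obtain ⟨a, b⟩ := e
      have hpos := size_pos (subst θ a)
      have hn' : size (subst θ a) + meas θ E ≤ n + 1 := by simpa [meas] using hn
      have hV' : InV V E R := ⟨fun e he => hV.e1 e (by simp [he]),
        fun e he => hV.e2 e (by simp [he]), hV.ri, hV.ro⟩
      have h1 : ∀ X t, ((a, b) = (.var X, t) ∨ (a, b) = (t, .var X)) →
          ∃ r' : ℕ → α, Good r' [] (Query.subst θ R) := by
        intro X t he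
        have hX : ¬ Occurs X t := by
          intro ho
          rcases he with he | he
          · have := hG.eqs _ List.mem_cons_self X (by rw [he]; exact .var) X (by rw [he]; exact ho)
            exact lt_irrefl _ this
          · have := hG.eqs _ List.mem_cons_self X (by rw [he]; exact ho) X (by rw [he]; exact .var)
            exact lt_irrefl _ this
        obtain ⟨hXt, hm'⟩ := hm.elim he hX
        have ht : ∀ x, Occurs x t → x ∈ V := by
          intro x hx
          rcases he with he | he
          · exact hV.e2 _ List.mem_cons_self x (by rw [he]; exact hx)
          · exact hV.e1 _ List.mem_cons_self x (by rw [he]; exact hx)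
        obtain ⟨r', hr'⟩ : ∃ r' : ℕ → α,
            Good r' (substE (sg X t) E) (Query.subst (sg X t) R) := by
          rcases he with he | he
          · rw [he] at hG; exact hG.elim1
          · rw [he] at hG; exact ⟨r, hG.elim2⟩
        have := ih (V \ {X}) r' _ _ (by rw [meas_sg hXt]; omega) (hV'.elim hX ht) hr' hm'
        rwa [query_subst_sg hXt] at this
      cases a with
      | var X => exact h1 X b (.inl rfl)
      | fn f ss =>
        cases b with
        | var X => exact h1 X _ (.inr rfl)
        | fn g ts =>
          have hs := hm.1 _ List.mem_cons_self
          simp only [subst_fn, Trm.fn.injEq] at hs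
          obtain ⟨rfl, hs⟩ := hs
          have hlen : ss.length = ts.length := by simpa using congrArg List.length hs
          have hsol : ∀ σ, SolvesL σ (ss.zip ts ++ E) ↔ SolvesL σ ((.fn f ss, .fn f ts) :: E) := by
            intro σ
            simp only [SolvesL, List.mem_append, or_imp, forall_and, zip_solves σ ss ts hlen,
              List.mem_cons, forall_eq, subst_fn, Trm.fn.injEq, true_and]
          have hl : ∀ e ∈ ss.zip ts, e.1 ∈ ss ∧ e.2 ∈ ts := fun e he => List.of_mem_zip he
          have hms : (ss.zip ts).map Prod.snd = ts := List.map_snd_zip hlen.ge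
          have hmf : (ss.zip ts).map Prod.fst = ss := List.map_fst_zip hlen.le
          refine ih V r (ss.zip ts ++ E) R ?_ ?_ ?_ ?_
          · have : meas θ (ss.zip ts ++ E) = (ss.map (fun s => size (subst θ s))).sum + meas θ E := by
              conv_rhs => rw [← hmf]
              simp [meas, Function.comp_def]
            rw [this]
            simp only [subst_fn, size_fn, List.map_map, Function.comp_def] at hn'
            omega
          · refine ⟨fun e he x hx => ?_, fun e he x hx => ?_, hV.ri, hV.ro⟩
            · rcases List.mem_append.1 he with he | he
              · exact hV.e1 _ List.mem_cons_self x (.fn (hl e he).1 hx)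
              · exact hV'.e1 e he x hx
            · rcases List.mem_append.1 he with he | he
              · exact hV.e2 _ List.mem_cons_self x (.fn (hl e he).2 hx)
              · exact hV'.e2 e he x hx
          · refine ⟨fun x => ?_, fun e he x hx y hy => ?_, hG.ats⟩
            · have := hG.lin x
              simpa only [List.map_append, countL_append, hms, List.map_cons, countL_cons,
                count_fn] using this
            · rcases List.mem_append.1 he with he | he
              · exact hG.eqs _ List.mem_cons_self x (.fn (hl e he).1 hx) y (.fn (hl e he).2 hy)
              · exact hG.eqs e (by simp [he]) x hx y hy
          · exact ⟨(hsol θ).2 hm.1, fun σ h => hm.2 σ ((hsol σ).1 h)⟩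

theorem outC_append (x : ℕ) (R R' : Query) : outC x (R ++ R') = outC x R + outC x R' := by
  simp [outC]

theorem occurs_finite (t : Trm) : {x | Occurs x t}.Finite := by
  induction t using ind with
  | hv y => 
    simp [occurs_var]
  | hf f ts ih =>
    have : {x | Occurs x (.fn f ts)} = ⋃ t ∈ {t | t ∈ ts}, {x | Occurs x t} := by
      ext x; simp [occurs_fn]
    rw [this]
    exact Set.Finite.biUnion (List.finite_toSet ts) ih

theorem varsL_finite (l : List Trm) : (varsL l).Finite := by
  have : varsL l = {x | Occurs x (.fn 0 l)} := by ext x; simp [occurs_fn, varsL]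
  rw [this]; exact occurs_finite _

theorem core (P S : Query) (A : Atom) (C : Clause)
    (hQ : TidyQ (P ++ A :: S)) (hC : TidyC C)
    (hdisj : queryVars (P ++ A :: S) ∩ clauseVars C = ∅)
    (hlen_in : A.inp.length = C.head.inp.length)
    (hlen_out : A.out.length = C.head.out.length)
    (θ : ℕ → Trm) (hθ : IsMgu θ (atomEqs A C.head)) :
    TidyQ (Query.subst θ (P ++ C.body ++ S)) := by
  classical
  obtain ⟨rQ, hrQ⟩ := hQ.rank
  obtain ⟨rB, hrB⟩ := hC.1.rank
  have hd : ∀ x, x ∈ queryVars (P ++ A :: S) → x ∈ clauseVars C → False := by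
    intro x h1 h2
    have : x ∈ queryVars (P ++ A :: S) ∩ clauseVars C := ⟨h1, h2⟩
    rw [hdisj] at this; exact this
  have qi : ∀ D ∈ P ++ A :: S, ∀ x ∈ varsL D.inp, x ∈ queryVars (P ++ A :: S) := by
    rintro D hD x ⟨t, ht, hx⟩
    exact ⟨D, hD, t, by simp [ht], hx⟩
  have qo : ∀ D ∈ P ++ A :: S, ∀ x ∈ varsL D.out, x ∈ queryVars (P ++ A :: S) := by
    rintro D hD x ⟨t, ht, hx⟩
    exact ⟨D, hD, t, by simp [ht], hx⟩
  have bi : ∀ D ∈ C.body, ∀ x ∈ varsL D.inp, x ∈ clauseVars C := by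
    rintro D hD x ⟨t, ht, hx⟩
    exact .inr ⟨D, hD, t, by simp [ht], hx⟩
  have bo : ∀ D ∈ C.body, ∀ x ∈ varsL D.out, x ∈ clauseVars C := by
    rintro D hD x ⟨t, ht, hx⟩
    exact .inr ⟨D, hD, t, by simp [ht], hx⟩
  have ci : ∀ x ∈ varsL C.head.inp, x ∈ clauseVars C := by
    rintro x ⟨t, ht, hx⟩
    exact .inl ⟨t, by simp [ht], hx⟩
  have co : ∀ x ∈ varsL C.head.out, x ∈ clauseVars C := by
    rintro x ⟨t, ht, hx⟩
    exact .inl ⟨t, by simp [ht], hx⟩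
  have hAm : A ∈ P ++ A :: S := by simp
  let m : ℕ := (varsL_finite A.inp).toFinset.sup (fun x => rQ x + 1)
  have hm1 : ∀ x ∈ varsL A.inp, rQ x + 1 ≤ m := fun x hx =>
    Finset.le_sup (f := fun x => rQ x + 1) (by simpa using hx)
  have hm2 : ∀ y ∈ varsL A.out, m < rQ y + 1 := by
    intro y hy
    apply Nat.lt_succ_of_le
    apply Finset.sup_le
    intro x hx
    exact hrQ A hAm x (by simpa using hx) y hy
  let r : ℕ → ℕ ×ₗ ℕ := fun x =>
    if x ∈ clauseVars C then toLex (m, rB x + 1) else toLex (rQ x + 1, 0)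
  have rq : ∀ x, x ∈ queryVars (P ++ A :: S) → r x = toLex (rQ x + 1, 0) := by
    intro x hx; simp only [r]; rw [if_neg (fun h => hd x hx h)]
  have rc : ∀ x, x ∈ clauseVars C → r x = toLex (m, rB x + 1) := by
    intro x hx; simp only [r]; rw [if_pos hx]
  let E := A.inp.zip C.head.inp ++ C.head.out.zip A.out
  have hsol : ∀ σ, SolvesL σ E ↔ Solves σ (atomEqs A C.head) := by
    intro σ
    have e1 : Solves σ (atomEqs A C.head) ↔
        ∀ e ∈ (A.inp ++ A.out).zip (C.head.inp ++ C.head.out), subst σ e.1 = subst σ e.2 := Iff.rfl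
    rw [e1, List.zip_append hlen_in]
    simp only [SolvesL, E, List.mem_append, or_imp, forall_and, zip_solves σ _ _ hlen_in,
      zip_solves σ _ _ hlen_out, zip_solves σ _ _ hlen_out.symm]
    rw [eq_comm (a := List.map (subst σ) A.out)]
  have hE : E.map Prod.snd = C.head.inp ++ A.out := by
    simp only [E, List.map_append, List.map_snd_zip hlen_in.ge, List.map_snd_zip hlen_out.le]
  have hG : Good r E (P ++ C.body ++ S) := by
    refine ⟨fun x => ?_, ?_, ?_⟩
    · rw [hE, countL_append, outC_append, outC_append]
      have h1 : outC x P + (countL x A.out + outC x S) ≤ 1 := by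
        have := hQ.1 x; simpa [outC] using this
      have h2 : outC x C.body ≤ 1 := hC.1.1 x
      have h3 : countL x C.head.inp ≤ 1 := hC.2.1 x
      have h4 : 0 < countL x C.head.inp → outC x C.body = 0 := by
        intro h
        by_contra h0
        obtain ⟨D, hD, hx⟩ := (outC_pos x C.body).1 (Nat.pos_of_ne_zero h0)
        exact hC.2.2 x ((countL_pos _ _).1 h) D hD hx
      have h5 : 0 < outC x (P ++ A :: S) → x ∈ queryVars (P ++ A :: S) := by
        intro h
        obtain ⟨D, hD, hx⟩ := (outC_pos x _).1 h
        exact qo D hD x hx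
      have h6 : 0 < countL x C.head.inp → x ∈ clauseVars C := fun h =>
        ci x ((countL_pos _ _).1 h)
      have h7 : 0 < outC x C.body → x ∈ clauseVars C := by
        intro h
        obtain ⟨D, hD, hx⟩ := (outC_pos x _).1 h
        exact bo D hD x hx
      have h8 : outC x (P ++ A :: S) = outC x P + (countL x A.out + outC x S) := by
        simp [outC]
      rw [h8] at h5
      have h9 := hd x
      by_cases hx : x ∈ clauseVars C
      · have : ¬ 0 < outC x P + (countL x A.out + outC x S) := fun h => h9 (h5 h) hx
        omega
      · have a1 : ¬ 0 < countL x C.head.inp := fun h => hx (h6 h)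
        have a2 : ¬ 0 < outC x C.body := fun h => hx (h7 h)
        omega
    · intro e he x hx y hy
      rcases List.mem_append.1 he with he | he
      · obtain ⟨g1, g2⟩ := List.of_mem_zip (a := e.1) (b := e.2) he
        have hx' : x ∈ varsL A.inp := ⟨_, g1, hx⟩
        have hy' : y ∈ varsL C.head.inp := ⟨_, g2, hy⟩
        rw [rq x (qi A hAm x hx'), rc y (ci y hy'), Prod.Lex.toLex_lt_toLex]
        have := hm1 x hx'
        simp only
        omega
      · obtain ⟨g1, g2⟩ := List.of_mem_zip (a := e.1) (b := e.2) he
        have hx' : x ∈ varsL C.head.out := ⟨_, g1, hx⟩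
        have hy' : y ∈ varsL A.out := ⟨_, g2, hy⟩
        rw [rc x (co x hx'), rq y (qo A hAm y hy'), Prod.Lex.toLex_lt_toLex]
        exact .inl (hm2 y hy')
    · intro D hD x hx y hy
      have hD' : D ∈ C.body ∨ D ∈ P ++ A :: S := by
        simp only [List.mem_append, List.mem_cons] at hD ⊢; tauto
      rcases hD' with hD | hD
      · rw [rc x (bi D hD x hx), rc y (bo D hD y hy), Prod.Lex.toLex_lt_toLex]
        exact .inr ⟨rfl, Nat.succ_lt_succ (hrB D hD x hx y hy)⟩
      · rw [rq x (qi D hD x hx), rq y (qo D hD y hy), Prod.Lex.toLex_lt_toLex]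
        have := hrQ D hD x hx y hy
        simp only
        omega
  have hW : WMgu Set.univ θ E := ⟨(hsol θ).2 hθ.1, fun σ hσ => by
    obtain ⟨ρ, h⟩ := hθ.2 σ ((hsol σ).1 hσ)
    exact ⟨ρ, fun x _ => h x⟩⟩
  obtain ⟨r', h⟩ := main_lemma θ _ Set.univ r E _ le_rfl
    ⟨fun _ _ _ _ => trivial, fun _ _ _ _ => trivial, fun _ _ _ _ => trivial,
      fun _ _ _ _ => trivial⟩ hG hW
  exact h.tidy

/-- Let `Q` be a tidy query and `C = H ← B` a tidy clause that is variable
disjoint from `Q`.  Then every SLD-resolvent of `Q` and `C` (with respect to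
any selected atom of `Q`) is a tidy query. -/
theorem stmt12 (Q : Query) (C : Clause)
    (hQ : TidyQ Q) (hC : TidyC C)
    (hdisj : queryVars Q ∩ clauseVars C = ∅)
    (i : ℕ) (hi : i < Q.length)
    (hpred : (Q.get ⟨i, hi⟩).pred = C.head.pred)
    (hlen_in : (Q.get ⟨i, hi⟩).inp.length = C.head.inp.length)
    (hlen_out : (Q.get ⟨i, hi⟩).out.length = C.head.out.length)
    (θ : ℕ → Trm) (hθ : IsMgu θ (atomEqs (Q.get ⟨i, hi⟩) C.head)) :
    TidyQ (Resolvent Q i C θ) := by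
  have hsplit : Q = Q.take i ++ Q.get ⟨i, hi⟩ :: Q.drop (i + 1) := by
    simp
  exact core (Q.take i) (Q.drop (i + 1)) (Q.get ⟨i, hi⟩) C (hsplit ▸ hQ) hC
    (hsplit ▸ hdisj) hlen_in hlen_out θ hθ
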